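/- Fix n ≥ 1 and a subset X = {x_1 < ⋯ < x_k} ⊆ [n]. Then the number of permutations σ ∈ S_n with DT(σ) ⊆ X equals (k+1)^{x_1 − 1} · k^{x_2 − x_1} · ⋯ · 3^{x_{k−1} − x_{k−2}} · 2^{x_k − x_{k−1}} (for X = ∅ this empty product equals 1, counting only the identity permutation). -/

import Mathlib

/-!
The count is computed by deleting the smallest value. If `σ` arises from a permutation `τ` of the
remaining values by inserting the minimum, the minimum is never a descent top, the entry just before
it (if any) always is, and no other entry changes its status. Hence `DT σ ⊆ X` holds iff
the same holds for `τ` and the minimum is placed either in front or right after an element of `X`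
(`valid_insertMin`). This gives `1 + #{x ∈ X : x > minimum}` choices for each admissible `τ`
(`card_valid_succ`), so the number of permutations is `∏_{y=1}^{n} (1 + #{x ∈ X : x > y})`.
Grouping the equal factors of this product yields `hatFactorial X` (`prod_getD_eq_prod_Ico`).
-/

/-- The descent top set of a permutation `σ` of `{0,…,n-1}`, recorded with one-based values:
`DT(σ) = {σ(i) : σ(i) > σ(i+1)} ⊆ {1,…,n}` (values shifted by `+1` to be one-based). -/
def DT {n : ℕ} (σ : Equiv.Perm (Fin n)) : Finset ℕ :=
  Finset.image (fun i => (σ i : ℕ) + 1)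
    (Finset.univ.filter fun i : Fin n => ∃ j : Fin n, (j : ℕ) = (i : ℕ) + 1 ∧ σ j < σ i)

/-- For `X = {x_1 < ⋯ < x_k} ⊆ ℕ`, the product
`(k+1)^{x_1−1} · k^{x_2−x_1} · ⋯ · 3^{x_{k−1}−x_{k−2}} · 2^{x_k−x_{k−1}}`
(the empty product for `X = ∅` equals `1`). -/
def hatFactorial (X : Finset ℕ) : ℕ :=
  ∏ i ∈ Finset.range X.card,
    (X.card + 1 - i) ^ ((1 :: X.sort (· ≤ ·)).getD (i + 1) 0 - (1 :: X.sort (· ≤ ·)).getD i 0)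

open Classical in
/-- The permutations of `{0,…,n-1}` all of whose descent tops (zero-based) satisfy `P`. -/
noncomputable def validPerms (n : ℕ) (P : ℕ → Prop) : Finset (Equiv.Perm (Fin n)) :=
  Finset.univ.filter fun σ => ∀ i j : Fin n, (j : ℕ) = i + 1 → σ j < σ i → P (σ i)

/-- The permutation obtained from `τ` by raising all values by one and inserting the value `0` at
position `p`. -/
def insertMin {n : ℕ} (p : Fin (n + 1)) (τ : Equiv.Perm (Fin n)) : Equiv.Perm (Fin (n + 1)) :=
  ((finSuccEquiv' p).trans (Equiv.optionCongr τ)).trans (finSuccEquiv' 0).symm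

lemma insertMin_self {n : ℕ} (p : Fin (n + 1)) (τ : Equiv.Perm (Fin n)) :
    insertMin p τ p = 0 := by
  simp [insertMin]

lemma insertMin_succAbove {n : ℕ} (p : Fin (n + 1)) (τ : Equiv.Perm (Fin n)) (q : Fin n) :
    insertMin p τ (p.succAbove q) = (τ q).succ := by
  simp [insertMin]

lemma insertMin_bijective (n : ℕ) :
    Function.Bijective
      (fun x : Fin (n + 1) × Equiv.Perm (Fin n) => insertMin x.1 x.2) := by
  rw [Fintype.bijective_iff_injective_and_card]
  constructor
  · rintro ⟨p, τ⟩ ⟨p₂, τ₂⟩ h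
    simp only at h
    have hp : p = p₂ := by
      apply (insertMin p τ).injective
      rw [insertMin_self, h, insertMin_self]
    subst hp
    congr 1
    ext1 q
    apply Fin.succ_injective
    rw [← insertMin_succAbove p, h, insertMin_succAbove]
  · simp [Fintype.card_perm, Nat.factorial_succ]

lemma val_succAbove {n : ℕ} (p : Fin (n + 1)) (q : Fin n) :
    (p.succAbove q : ℕ) = if (q : ℕ) < p then (q : ℕ) else q + 1 := by
  unfold Fin.succAbove
  simp only [Fin.lt_def, Fin.val_castSucc]
  split_ifs <;> simp

lemma valid_insertMin {n : ℕ} (P : ℕ → Prop) (p : Fin (n + 1)) (τ : Equiv.Perm (Fin n)) :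
    insertMin p τ ∈ validPerms (n + 1) P ↔
      τ ∈ validPerms n (fun v => P (v + 1)) ∧ ∀ q : Fin n, p = q.succ → P (τ q + 1) := by
  simp only [validPerms, Finset.mem_filter, Finset.mem_univ, true_and]
  constructor
  · intro h
    have key : ∀ q : Fin n, p = q.succ → P (τ q + 1) := by
      intro q hq
      have h1 := h (p.succAbove q) p
      rw [insertMin_self, insertMin_succAbove, val_succAbove] at h1
      simpa using h1 (by simp [hq]) (Fin.succ_pos _)
    refine ⟨fun i j hij hlt => ?_, key⟩
    by_cases hp : (p : ℕ) = i + 1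
    · exact key i (Fin.ext (by simpa using hp))
    · have h1 := h (p.succAbove i) (p.succAbove j)
      rw [insertMin_succAbove, insertMin_succAbove, val_succAbove, val_succAbove] at h1
      simpa using h1 (by split_ifs <;> omega) (Fin.succ_lt_succ_iff.2 hlt)
  · rintro ⟨h, key⟩ i j hij hlt
    rcases Fin.eq_self_or_eq_succAbove p i with rfl | ⟨q, rfl⟩
    · rw [insertMin_self] at hlt
      exact absurd hlt (Fin.not_lt_zero _)
    rw [insertMin_succAbove] at hlt ⊢
    rw [val_succAbove] at hij
    rcases Fin.eq_self_or_eq_succAbove p j with rfl | ⟨r, rfl⟩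
    · have := key q (Fin.ext (by
        rw [Fin.val_succ]
        split_ifs at hij <;> omega))
      simpa using this
    · rw [insertMin_succAbove, Fin.succ_lt_succ_iff] at hlt
      rw [val_succAbove] at hij
      simpa using h q r (by split_ifs at hij <;> omega) hlt

open Classical in
lemma card_valid_succ (n : ℕ) (P : ℕ → Prop) :
    (validPerms (n + 1) P).card =
      (1 + ((Finset.Ico 1 (n + 1)).filter P).card) *
        (validPerms n (fun v => P (v + 1))).card := by
  have hpos (τ : Equiv.Perm (Fin n)) :
      (Finset.univ.filter fun p : Fin (n + 1) => ∀ q : Fin n, p = q.succ → P (τ q + 1)).card =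
        1 + ((Finset.Ico 1 (n + 1)).filter P).card := by
    rw [Fin.card_filter_univ_succ, if_pos (fun q hq => absurd hq.symm (Fin.succ_ne_zero q)),
      add_comm]
    congr 1
    refine Finset.card_bij (fun q _ => (τ q : ℕ) + 1) ?_ ?_ ?_
    · intro q hq
      simp at hq
      simp [hq]
    · intro a _ b _ hab
      exact τ.injective (Fin.ext (by simpa using hab))
    · intro v hv
      simp only [Finset.mem_filter, Finset.mem_Ico] at hv
      refine ⟨τ.symm ⟨v - 1, by omega⟩, ?_, ?_⟩
      · have : v - 1 + 1 = v := by omega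
        simp [this, hv.2]
      · simp
        omega
  have hcard : (validPerms (n + 1) P).card =
      ((validPerms n (fun v => P (v + 1))).sigma fun τ =>
        Finset.univ.filter fun p : Fin (n + 1) =>
          ∀ q : Fin n, p = q.succ → P (τ q + 1)).card := by
    symm
    refine Finset.card_bij (fun x _ => insertMin x.2 x.1) ?_ ?_ ?_
    · rintro ⟨τ, p⟩ hx
      simp only [Finset.mem_sigma, Finset.mem_filter, Finset.mem_univ, true_and] at hx
      exact (valid_insertMin P p τ).2 hx
    · rintro ⟨τ, p⟩ _ ⟨τ₂, p₂⟩ _ h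
      have := (insertMin_bijective n).1 (a₁ := (p, τ)) (a₂ := (p₂, τ₂)) h
      simp only [Prod.mk.injEq] at this
      rw [this.1, this.2]
    · intro σ hσ
      obtain ⟨⟨p, τ⟩, rfl⟩ := (insertMin_bijective n).2 σ
      refine ⟨⟨τ, p⟩, ?_, rfl⟩
      simp only [Finset.mem_sigma, Finset.mem_filter, Finset.mem_univ, true_and]
      exact (valid_insertMin P p τ).1 hσ
  rw [hcard, Finset.card_sigma, Finset.sum_congr rfl (fun τ _ => hpos τ), Finset.sum_const,
    smul_eq_mul, mul_comm]

open Classical in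
lemma card_valid (n : ℕ) (P : ℕ → Prop) :
    (validPerms n P).card =
      ∏ i ∈ Finset.range n, (1 + ((Finset.Ico (i + 1) n).filter P).card) := by
  induction n generalizing P with
  | zero => simp [validPerms]
  | succ n ih =>
    rw [card_valid_succ, ih, Finset.prod_range_succ', mul_comm]
    congr 1
    refine Finset.prod_congr rfl fun i _ => ?_
    congr 1
    refine Finset.card_bij (fun v _ => v + 1) ?_ ?_ ?_
    · intro v hv
      simpa using hv
    · intro a _ b _ hab
      omega
    · intro v hv
      simp only [Finset.mem_filter, Finset.mem_Ico] at hv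
      refine ⟨v - 1, ?_, by omega⟩
      have : v - 1 + 1 = v := by omega
      simp only [Finset.mem_filter, Finset.mem_Ico, this]
      exact ⟨by omega, hv.2⟩

/-- The factor at `y` counts the entries of `L` exceeding `y`; it is constant on each interval
between consecutive entries of `a :: L`, which produces the powers on the left. -/
lemma prod_getD_eq_prod_Ico (N : ℕ) (L : List ℕ) (a : ℕ) (hs : (a :: L).Pairwise (· ≤ ·))
    (hN : ∀ x ∈ L, x ≤ N) :
    ∏ i ∈ Finset.range L.length,
        (L.length + 1 - i) ^ ((a :: L).getD (i + 1) 0 - (a :: L).getD i 0) =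
      ∏ y ∈ Finset.Ico a N, (1 + L.countP (fun x => decide (y < x))) := by
  induction L generalizing a with
  | nil => simp
  | cons b M ih =>
    rw [List.pairwise_cons] at hs
    obtain ⟨hab, hs⟩ := hs
    have hbM := (List.pairwise_cons.1 hs).1
    have hb : a ≤ b := hab b (by simp)
    have hbN : b ≤ N := hN b (by simp)
    rw [← Finset.prod_Ico_consecutive _ hb hbN, List.length_cons, Finset.prod_range_succ',
      mul_comm]
    congr 1
    · have : ∀ y ∈ Finset.Ico a b,
          1 + (b :: M).countP (fun x => decide (y < x)) = M.length + 1 + 1 := by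
        intro y hy
        rw [Finset.mem_Ico] at hy
        rw [List.countP_eq_length.2, List.length_cons, add_comm]
        intro x hx
        rcases List.mem_cons.1 hx with rfl | hx
        · simpa using hy.2
        · simpa using hy.2.trans_le (hbM x hx)
      rw [Finset.prod_congr rfl this]
      simp
    · have h1 : ∀ y ∈ Finset.Ico b N, 1 + (b :: M).countP (fun x => decide (y < x)) =
          1 + M.countP (fun x => decide (y < x)) := by
        intro y hy
        rw [Finset.mem_Ico] at hy
        rw [List.countP_cons_of_neg (by simpa using hy.1)]
      rw [Finset.prod_congr rfl h1, ← ih b hs (fun x hx => hN x (by simp [hx]))]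
      refine Finset.prod_congr rfl fun i _ => ?_
      simp only [List.getD_cons_succ, Nat.add_sub_add_right]

/-- for `n ≥ 1` and `X = {x_1 < ⋯ < x_k} ⊆ [n]`, the number of permutations
`σ ∈ S_n` with `DT(σ) ⊆ X` equals `(k+1)^{x_1−1}·k^{x_2−x_1}·⋯·2^{x_k−x_{k−1}}`. -/
theorem stmt9 (n : ℕ) (hn : 1 ≤ n) (X : Finset ℕ) (hX : X ⊆ Finset.Icc 1 n) :
    (Finset.univ.filter fun σ : Equiv.Perm (Fin n) => DT σ ⊆ X).card = hatFactorial X := by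
  classical
  have h1 : (Finset.univ.filter fun σ : Equiv.Perm (Fin n) => DT σ ⊆ X) =
      validPerms n (fun v => v + 1 ∈ X) := by
    ext σ
    simp only [validPerms, DT, Finset.mem_filter, Finset.mem_univ, true_and,
      Finset.image_subset_iff]
    exact ⟨fun h i j hij hlt => h i ⟨j, hij, hlt⟩, fun h i ⟨j, hij, hlt⟩ => h i j hij hlt⟩
  have hmem : ∀ x ∈ X, 1 ≤ x ∧ x ≤ n := fun x hx => Finset.mem_Icc.1 (hX hx)
  have h2 := prod_getD_eq_prod_Ico (n + 1) (X.sort (· ≤ ·)) 1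
    (List.pairwise_cons.2 ⟨fun x hx => (hmem x ((Finset.mem_sort _).1 hx)).1,
      Finset.pairwise_sort X (· ≤ ·)⟩)
    (fun x hx => (hmem x ((Finset.mem_sort _).1 hx)).2.trans (Nat.le_succ n))
  rw [Finset.length_sort] at h2
  rw [h1, card_valid, hatFactorial, h2, Finset.prod_Ico_eq_prod_range]
  refine Finset.prod_congr rfl fun i _ => ?_
  congr 1
  have h3 : (X.sort (· ≤ ·)).countP (fun x => decide (1 + i < x)) =
      (X.filter fun x => 1 + i < x).card := by
    rw [Finset.card_def, Finset.filter_val, ← Multiset.countP_eq_card_filter,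
      ← Finset.sort_eq X (· ≤ ·), Multiset.coe_countP]
  rw [h3]
  refine Finset.card_bij (fun v _ => v + 1) ?_ ?_ ?_
  · intro v hv
    simp only [Finset.mem_filter, Finset.mem_Ico] at hv ⊢
    exact ⟨hv.2, by omega⟩
  · intro a _ b _ hab
    omega
  · intro x hx
    simp only [Finset.mem_filter] at hx
    have := hmem x hx.1
    have hx1 : x - 1 + 1 = x := by omega
    refine ⟨x - 1, ?_, hx1⟩
    simp only [Finset.mem_filter, Finset.mem_Ico, hx1]
    exact ⟨by omega, hx.1⟩
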